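/- Let n be a positive even integer. There exists a unique family of polynomials {𝔊^Sp_z}_{z ∈ I^FPF_n} in ℤ[β][x_1,…,x_n] such that 𝔊^Sp_{n⋯321} = ∏_{1 ≤ i < j ≤ n−i} (x_i + x_j + β x_i x_j), where n⋯321 denotes the order-reversing permutation i ↦ n+1−i, and such that ∂_i^{(β)} 𝔊^Sp_z = 𝔊^Sp_{s_i z s_i} for every z ∈ I^FPF_n and every i ∈ [n−1] with i+1 ≠ z(i) > z(i+1) ≠ i. -/

import Mathlib

open MvPolynomial

noncomputable section

/-- The coefficient ring `ℤ[β]`. -/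
abbrev Rb : Type := Polynomial ℤ

/-- The indeterminate `β`. -/
def bb : Rb := Polynomial.X

/-- The order-reversing permutation `n⋯321`, i.e. `i ↦ n+1-i` in 1-indexed notation. -/
def revPerm (n : ℕ) : Equiv.Perm (Fin n) :=
  ⟨Fin.rev, Fin.rev, fun i => Fin.rev_rev i, fun i => Fin.rev_rev i⟩

/-- `z` is a fixed-point-free involution. -/
def IsFPF {n : ℕ} (z : Equiv.Perm (Fin n)) : Prop :=
  z * z = 1 ∧ ∀ i, z i ≠ i

/-- `x_i + x_j + β x_i x_j`. -/
def oplus {n : ℕ} (i j : Fin n) : MvPolynomial (Fin n) Rb :=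
  X i + X j + C bb * (X i * X j)

/-- `IsDivDiffB i j f g` encodes `∂_i^{(β)} f = g` where `j = i+1`:
`∂_i^{(β)} f = ((1+βx_j) f - s_i((1+βx_j) f)) / (x_i - x_j)`, stated multiplicatively
(the quotient is exact, and `g` is uniquely determined since the ring is a domain). -/
def IsDivDiffB {n : ℕ} (i j : Fin n) (f g : MvPolynomial (Fin n) Rb) : Prop :=
  (X i - X j) * g =
    (1 + C bb * X j) * f - rename ⇑(Equiv.swap i j) ((1 + C bb * X j) * f)

/-- `∏_{1 ≤ i < j ≤ n-i} (x_i + x_j + β x_i x_j)` (variables 0-indexed). -/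
def spTop (n : ℕ) : MvPolynomial (Fin n) Rb :=
  ∏ p ∈ Finset.univ.filter
      (fun p : Fin n × Fin n => p.1 < p.2 ∧ (p.1 : ℕ) + (p.2 : ℕ) + 2 ≤ n),
    oplus p.1 p.2

/-- `x_1^{n-1} x_2^{n-2} ⋯ x_{n-1}^1` (variables 0-indexed). -/
def grTop (n : ℕ) : MvPolynomial (Fin n) Rb :=
  ∏ a : Fin n, X a ^ (n - 1 - (a : ℕ))

/-- The defining property of the family of symplectic Grothendieck polynomials. -/
def IsSpFam (n : ℕ) (G : Equiv.Perm (Fin n) → MvPolynomial (Fin n) Rb) : Prop :=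
  G (revPerm n) = spTop n ∧
    ∀ z : Equiv.Perm (Fin n), IsFPF z →
      ∀ i j : Fin n, (j : ℕ) = (i : ℕ) + 1 →
        z i ≠ j → z j ≠ i → z j < z i →
          IsDivDiffB i j (G z) (G (Equiv.swap i j * z * Equiv.swap i j))

/-- The defining property of the family of Grothendieck polynomials. -/
def IsGrothFam (n : ℕ) (G : Equiv.Perm (Fin n) → MvPolynomial (Fin n) Rb) : Prop :=
  G (revPerm n) = grTop n ∧
    ∀ (w : Equiv.Perm (Fin n)) (i j : Fin n), (j : ℕ) = (i : ℕ) + 1 →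
      w j < w i → IsDivDiffB i j (G w) (G (w * Equiv.swap i j))

/-- The length (number of inversions) of a permutation. -/
def invLen {n : ℕ} (w : Equiv.Perm (Fin n)) : ℕ :=
  (Finset.univ.filter (fun p : Fin n × Fin n => p.1 < p.2 ∧ w p.2 < w p.1)).card

/-- The fixed-point-free involution length `ℓ_fpf(z) = #{(i,j) : z(i) > z(j) < i < j}`. -/
def fpfLen {n : ℕ} (z : Equiv.Perm (Fin n)) : ℕ :=
  (Finset.univ.filter
      (fun p : Fin n × Fin n => z p.2 < z p.1 ∧ z p.2 < p.1 ∧ p.1 < p.2)).card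

/-- The underlying function of `Θ = (1,2)(3,4)⋯(n-1,n)`. -/
def thetaFun (n : ℕ) (hn : n % 2 = 0) (i : Fin n) : Fin n :=
  ⟨if (i : ℕ) % 2 = 0 then (i : ℕ) + 1 else (i : ℕ) - 1, by
    have hi := i.isLt
    split_ifs with h <;> omega⟩

/-- The fixed-point-free involution `Θ = (1,2)(3,4)⋯(n-1,n)`. -/
def theta (n : ℕ) (hn : n % 2 = 0) : Equiv.Perm (Fin n) :=
  Function.Involutive.toPerm (thetaFun n hn) (by
    intro i
    have hi := i.isLt
    apply Fin.ext
    simp only [thetaFun]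
    split_ifs <;> omega)

/-- One step of the partial Hecke action: `heckeStep a z = some (z · s_{a+1})` when defined,
with `a` a 0-indexed letter (so `a` corresponds to the simple transposition of `a+1, a+2`
in 1-indexed notation). -/
def heckeStep {n : ℕ} (a : ℕ) (z : Equiv.Perm (Fin n)) : Option (Equiv.Perm (Fin n)) :=
  if h : a + 1 < n then
    let i : Fin n := ⟨a, Nat.lt_of_succ_lt h⟩
    let j : Fin n := ⟨a + 1, h⟩
    if z i < z j then some (Equiv.swap i j * z * Equiv.swap i j)
    else if z i = j ∧ z j = i then none
    else if z i ≠ j ∧ z j ≠ i ∧ z j < z i then some z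
    else none
  else none

/-- Apply a word of (0-indexed) letters to `z` via the partial Hecke action. -/
def heckeApply {n : ℕ} (l : List ℕ) (z : Equiv.Perm (Fin n)) :
    Option (Equiv.Perm (Fin n)) :=
  l.foldl (fun o a => o.bind (heckeStep a)) (some z)

/-- The simple transposition corresponding to the 0-indexed letter `a`. -/
def swapAt (n : ℕ) (a : ℕ) : Equiv.Perm (Fin n) :=
  if h : a + 1 < n then Equiv.swap ⟨a, Nat.lt_of_succ_lt h⟩ ⟨a + 1, h⟩ else 1

/-- The permutation `s_{i_1} s_{i_2} ⋯ s_{i_l}` of a word. -/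
def wordToPerm (n : ℕ) (l : List ℕ) : Equiv.Perm (Fin n) := (l.map (swapAt n)).prod

/-- `l` is a reduced word for `w`. -/
def IsReducedWord (n : ℕ) (w : Equiv.Perm (Fin n)) (l : List ℕ) : Prop :=
  (∀ a ∈ l, a + 1 < n) ∧ wordToPerm n l = w ∧ l.length = invLen w

/-- The set of Hecke atoms `B_fpf(z)`. -/
def Bfpf (n : ℕ) (hn : n % 2 = 0) (z : Equiv.Perm (Fin n)) :
    Finset (Equiv.Perm (Fin n)) :=
  @Finset.filter _
    (fun w => ∃ l : List ℕ, IsReducedWord n w l ∧ heckeApply l (theta n hn) = some z)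
    (Classical.decPred _) Finset.univ

/-- `extPerm z w` is the permutation `z × w` acting on the first `m` letters by `z`
and the last `n` letters by `w`. -/
def extPerm {m n : ℕ} (z : Equiv.Perm (Fin m)) (w : Equiv.Perm (Fin n)) :
    Equiv.Perm (Fin (m + n)) :=
  finSumFinEquiv.symm.trans ((Equiv.sumCongr z w).trans finSumFinEquiv)

/-- `rank(z_{[i][j]}) = #{k ∈ [j] : z(k) ≤ i}` (1-indexed sizes `i, j`). -/
def permRank {n : ℕ} (z : Equiv.Perm (Fin n)) (i j : ℕ) : ℕ :=
  (Finset.univ.filter (fun k : Fin n => (k : ℕ) < j ∧ ((z k : Fin n) : ℕ) < i)).card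

/-- The rank of the upper-left `i × j` corner of `A` (1-indexed sizes `i, j ≤ n`). -/
def cornerRank {n : ℕ} (A : Matrix (Fin n) (Fin n) ℂ) (i j : ℕ) : ℕ :=
  Matrix.rank (Matrix.of fun (a : Fin (min i n)) (b : Fin (min j n)) =>
    A ⟨(a : ℕ), lt_of_lt_of_le a.isLt (min_le_right i n)⟩
      ⟨(b : ℕ), lt_of_lt_of_le b.isLt (min_le_right j n)⟩)

/-- The orthogonal Rothe diagram `D^O(z) = {(i, z(j)) : z(i) > z(j) ≤ i < j}` (0-indexed). -/
def DO (n : ℕ) (z : Equiv.Perm (Fin n)) : Finset (Fin n × Fin n) :=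
  Finset.image (fun p : Fin n × Fin n => (p.1, z p.2))
    (Finset.univ.filter (fun p : Fin n × Fin n => z p.2 < z p.1 ∧ z p.2 ≤ p.1 ∧ p.1 < p.2))

/-- The symplectic Rothe diagram `D^Sp(z) = {(i, z(j)) : z(i) > z(j) < i < j}` (0-indexed). -/
def DSp (n : ℕ) (z : Equiv.Perm (Fin n)) : Finset (Fin n × Fin n) :=
  Finset.image (fun p : Fin n × Fin n => (p.1, z p.2))
    (Finset.univ.filter (fun p : Fin n × Fin n => z p.2 < z p.1 ∧ z p.2 < p.1 ∧ p.1 < p.2))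

/-- The essential set `Ess(D) = {(i,j) ∈ D : (i,j+1) ∉ D and (i+1,j) ∉ D}`. -/
def Ess {n : ℕ} (D : Finset (Fin n × Fin n)) : Finset (Fin n × Fin n) :=
  D.filter (fun p =>
    (∀ q ∈ D, ¬(q.1 = p.1 ∧ (q.2 : ℕ) = (p.2 : ℕ) + 1)) ∧
    (∀ q ∈ D, ¬((q.1 : ℕ) = (p.1 : ℕ) + 1 ∧ q.2 = p.2)))

/-- A permutation is vexillary if it avoids the pattern 2143. -/
def Vexillary {n : ℕ} (z : Equiv.Perm (Fin n)) : Prop :=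
  ¬ ∃ i j k l : Fin n, i < j ∧ j < k ∧ k < l ∧ z j < z i ∧ z i < z l ∧ z l < z k

/-- The ideal of `ℤ[x_1,…,x_N]` generated by symmetric polynomials with zero constant term. -/
def ILambda (N : ℕ) : Ideal (MvPolynomial (Fin N) ℤ) :=
  Ideal.span {f : MvPolynomial (Fin N) ℤ |
    (∀ σ : Equiv.Perm (Fin N), rename (⇑σ) f = f) ∧ coeff 0 f = 0}

/-- Substitute `x_j = 0` for all `j > n`, producing a polynomial in `x_1,…,x_n`. -/
def truncVars (n N : ℕ) (f : MvPolynomial (Fin N) Rb) : MvPolynomial (Fin n) Rb :=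
  aeval (fun i : Fin N => if h : (i : ℕ) < n then X ⟨(i : ℕ), h⟩ else 0) f

/-- The order used to list the elements of a pipe-dream subset `S`:
rows weakly increasing, columns strictly decreasing within a row. -/
def rowOrder {n : ℕ} (p q : Fin n × Fin n) : Prop :=
  p.1 < q.1 ∨ (p.1 = q.1 ∧ q.2 < p.2)

/-- `δ(S)` is a symplectic Hecke word for `z` (with Hecke words computed from `Θ`);
here `L` is the listing of `S` in the order `rowOrder`, and `(a,b) ∈ S` (0-indexed)
contributes the 0-indexed letter `a + b`, i.e. the 1-indexed letter `(b+1)+(a+1)-1`. -/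
def DeltaHeckeWord (n : ℕ) (hn : n % 2 = 0) (z : Equiv.Perm (Fin n))
    (S : Finset (Fin n × Fin n)) : Prop :=
  ∃ L : List (Fin n × Fin n), L.toFinset = S ∧ L.Chain' rowOrder ∧
    heckeApply (L.map (fun p => (p.1 : ℕ) + (p.2 : ℕ))) (theta n hn) = some z

/-!
The recurrence, read backwards, transports the value at `n⋯321` down to any `z`: if `z` has an
ascent at `k`, the value at `z` is `∂_k` of the value at `s_k z s_k`, whose one-line notation is
lexicographically larger. This gives uniqueness; existence amounts to independence of the chain of
ascents. Two ascents `i`, `k` of `z` are reconciled by the braid and commutation relations of the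
`∂_k`, except when `z s_i z = s_k`, where `s_i z s_i = s_k z s_k` and both relations are silent.
The induction therefore also carries the following statement: whenever `z` maps `{i, i + 1}` onto
`{j, j + 1}` reversing the order, `∂_i` acts on the value at `z` as `∂_j` if `i ≠ j`, and as
multiplication by `-β` if `i = j`. For `n⋯321` it holds because every `∂_i` either multiplies the
product by `-β` or removes the single factor that breaks its symmetry under `s_i`, and this factor
is the same for `i` and `n - i`.
-/

section Perm

open Equiv (Perm)

variable {n : ℕ} {z : Perm (Fin n)}

theorem IsFPF.apply_apply (hz : IsFPF z) (x : Fin n) : z (z x) = x :=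
  Equiv.Perm.congr_fun hz.1 x

theorem IsFPF.mul_mul {s : Perm (Fin n)} (hz : IsFPF z) (hs : s * s = 1) : IsFPF (s * z * s) := by
  refine ⟨by grind [hz.1], fun x hx => hz.2 (s x) ?_⟩
  have hfix : s (s (z (s x))) = s x := congrArg s hx
  rwa [← Equiv.Perm.mul_apply, hs] at hfix

theorem isFPF_revPerm (hn : Even n) : IsFPF (revPerm n) := by
  refine ⟨Equiv.ext Fin.rev_rev, fun i hi => ?_⟩
  have hval : n - (i + 1) = (i : ℕ) := (Fin.val_rev i).symm.trans (congrArg Fin.val hi)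
  obtain ⟨r, hr⟩ := hn
  omega

end Perm

namespace SpGrothendieck

open Equiv (Perm)
open SimpleGraph (pathGraph)

section AdjacentTranspositions

variable {m : ℕ} {i j k : Fin m} {x y : Fin (m + 1)} {z : Perm (Fin (m + 1))}

/-- The transposition `s_k` exchanging `k` and `k + 1`. -/
abbrev adjSwap (k : Fin m) : Perm (Fin (m + 1)) := Equiv.swap k.castSucc k.succ

/-- The conjugate `s_k z s_k`. -/
def adjConj (k : Fin m) (z : Perm (Fin (m + 1))) : Perm (Fin (m + 1)) :=
  adjSwap k * z * adjSwap k

/-- The index `k` is an ascent of `z`. -/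
def IsAscent (z : Perm (Fin (m + 1))) (k : Fin m) : Prop := z k.castSucc < z k.succ

/-- `z` maps `{i, i + 1}` onto `{j, j + 1}` preserving the order, so that `z s_i z = s_j`. -/
def IsParallel (z : Perm (Fin (m + 1))) (i j : Fin m) : Prop :=
  z i.castSucc = j.castSucc ∧ z i.succ = j.succ

/-- `z` maps `{i, i + 1}` onto `{j, j + 1}` reversing the order, so that `z s_i z = s_j`. -/
def IsLinked (z : Perm (Fin (m + 1))) (i j : Fin m) : Prop :=
  z i.castSucc = j.succ ∧ z i.succ = j.castSucc

theorem adjConj_apply (k : Fin m) (z : Perm (Fin (m + 1))) (x : Fin (m + 1)) :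
    adjConj k z x = adjSwap k (z (adjSwap k x)) := rfl

theorem adjConj_adjConj (k : Fin m) (z : Perm (Fin (m + 1))) : adjConj k (adjConj k z) = z := by
  ext x
  simp [adjConj_apply]

theorem nodup_of_not_adj (hik : ¬(pathGraph m).Adj i k) (hne : i ≠ k) :
    [i.castSucc, i.succ, k.castSucc, k.succ].Nodup := by
  rw [SimpleGraph.pathGraph_adj] at hik
  grind

theorem adjSwap_commute (hik : ¬(pathGraph m).Adj i k) : Commute (adjSwap i) (adjSwap k) := by
  rcases eq_or_ne i k with rfl | hne
  · exact .refl _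
  · exact (Equiv.Perm.disjoint_swap_swap (nodup_of_not_adj hik hne)).commute

theorem adjConj_comm (hik : ¬(pathGraph m).Adj i k) (z : Perm (Fin (m + 1))) :
    adjConj i (adjConj k z) = adjConj k (adjConj i z) := by
  have h := (adjSwap_commute hik).eq
  unfold adjConj
  grind

theorem adjSwap_adjSwap_castSucc (hik : (pathGraph m).Adj i k) :
    adjSwap k (adjSwap i k.castSucc) = i.castSucc := by
  simp only [SimpleGraph.pathGraph_adj, Equiv.swap_apply_def, Fin.ext_iff] at *
  grind

theorem adjSwap_adjSwap_succ (hik : (pathGraph m).Adj i k) :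
    adjSwap k (adjSwap i k.succ) = i.succ := by
  simp only [SimpleGraph.pathGraph_adj, Equiv.swap_apply_def, Fin.ext_iff] at *
  grind

theorem adjSwap_braid (hik : (pathGraph m).Adj i k) :
    adjSwap i * adjSwap k * adjSwap i = adjSwap k * adjSwap i * adjSwap k := by
  have h := Equiv.mul_swap_eq_swap_mul (adjSwap k * adjSwap i) k.castSucc k.succ
  simp only [Equiv.Perm.mul_apply, adjSwap_adjSwap_castSucc hik, adjSwap_adjSwap_succ hik] at h
  rw [mul_assoc]
  exact h.symm

theorem adjConj_braid (hik : (pathGraph m).Adj i k) (z : Perm (Fin (m + 1))) :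
    adjConj i (adjConj k (adjConj i z)) = adjConj k (adjConj i (adjConj k z)) := by
  have h := adjSwap_braid hik
  unfold adjConj
  grind

theorem adjSwap_lt_adjSwap (hxy : x < y) (hk : x = k.castSucc → y ≠ k.succ) :
    adjSwap k x < adjSwap k y := by
  simp only [Equiv.swap_apply_def, Fin.ext_iff, Fin.lt_def] at *
  grind

theorem adjSwap_castSucc_of_ne (hik : ¬(pathGraph m).Adj i k) (hne : i ≠ k) :
    adjSwap k i.castSucc = i.castSucc := by
  simp only [SimpleGraph.pathGraph_adj, Equiv.swap_apply_def, Fin.ext_iff] at *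
  grind

theorem adjSwap_succ_of_ne (hik : ¬(pathGraph m).Adj i k) (hne : i ≠ k) :
    adjSwap k i.succ = i.succ := by
  simp only [SimpleGraph.pathGraph_adj, Equiv.swap_apply_def, Fin.ext_iff] at *
  grind

theorem isAscent_adjConj_iff (hz : IsFPF z) : IsAscent (adjConj k z) k ↔
    z k.castSucc ≠ k.succ ∧ z k.succ ≠ k.castSucc ∧ z k.succ < z k.castSucc := by
  have hfix := hz.2
  have hinv := hz.apply_apply
  rw [IsAscent, adjConj_apply, adjConj_apply, Equiv.swap_apply_left, Equiv.swap_apply_right,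
    Equiv.swap_apply_def, Equiv.swap_apply_def]
  grind

theorem IsLinked.symm (hz : IsFPF z) (h : IsLinked z i j) : IsLinked z j i :=
  ⟨by rw [← h.2, hz.apply_apply], by rw [← h.1, hz.apply_apply]⟩

theorem IsParallel.symm (hz : IsFPF z) (h : IsParallel z i j) : IsParallel z j i :=
  ⟨by rw [← h.1, hz.apply_apply], by rw [← h.2, hz.apply_apply]⟩

theorem IsParallel.adjConj_eq (hz : IsFPF z) (hij : ¬(pathGraph m).Adj i j)
    (h : IsParallel z i j) : adjConj i z = adjConj j z := by
  have hi : z * adjSwap i = adjSwap j * z := by rw [Equiv.mul_swap_eq_swap_mul, h.1, h.2]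
  have hj : z * adjSwap j = adjSwap i * z := by
    rw [Equiv.mul_swap_eq_swap_mul, (h.symm hz).1, (h.symm hz).2]
  rw [adjConj, adjConj, mul_assoc, mul_assoc, hi, hj, ← mul_assoc, ← mul_assoc,
    (adjSwap_commute hij).eq]

theorem IsParallel.isLinked_adjConj (hij : ¬(pathGraph m).Adj i j) (hne : i ≠ j)
    (h : IsParallel z i j) : IsLinked (adjConj i z) i j := by
  have hji := mt SimpleGraph.Adj.symm hij
  rw [IsLinked, adjConj_apply, adjConj_apply, Equiv.swap_apply_left, Equiv.swap_apply_right, h.1,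
    h.2, adjSwap_castSucc_of_ne hji hne.symm, adjSwap_succ_of_ne hji hne.symm]
  exact ⟨rfl, rfl⟩

theorem IsAscent.adjConj_of_not_isParallel (hki : ¬(pathGraph m).Adj k i) (hne : k ≠ i)
    (hk : IsAscent z k) (hpar : ¬IsParallel z k i) : IsAscent (adjConj i z) k := by
  rw [IsAscent, adjConj_apply, adjConj_apply, adjSwap_castSucc_of_ne hki hne,
    adjSwap_succ_of_ne hki hne]
  exact adjSwap_lt_adjSwap hk (not_and.1 hpar)

theorem IsAscent.adjConj_of_adj (hz : IsFPF z) (hik : (pathGraph m).Adj i k)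
    (hi : IsAscent z i) (hk : IsAscent z k) : IsAscent (adjConj k z) i := by
  have hfix := hz.2
  have hinv := hz.apply_apply
  rw [SimpleGraph.pathGraph_adj] at hik
  simp only [IsAscent, adjConj_apply] at *
  refine adjSwap_lt_adjSwap ?_ ?_ <;> grind

theorem IsAscent.adjConj_adjConj_of_adj (hz : IsFPF z) (hik : (pathGraph m).Adj i k)
    (hi : IsAscent z i) : IsAscent (adjConj i (adjConj k z)) k := by
  have hfix := hz.2
  have hinv := hz.apply_apply
  simp only [IsAscent, adjConj_apply, adjSwap_adjSwap_castSucc hik, adjSwap_adjSwap_succ hik]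
  rw [SimpleGraph.pathGraph_adj] at hik
  refine adjSwap_lt_adjSwap (adjSwap_lt_adjSwap hi ?_) ?_
  · grind
  · simp only [Equiv.swap_apply_def]
    grind

theorem IsLinked.isAscent_adjConj (hz : IsFPF z) (hij : IsLinked z i j)
    (hik : (pathGraph m).Adj i k) (hk : IsAscent z k) : IsAscent (adjConj k z) i := by
  have hfix := hz.2
  have hinv := hz.apply_apply
  rw [SimpleGraph.pathGraph_adj] at hik
  simp only [IsAscent, IsLinked, adjConj_apply] at *
  refine adjSwap_lt_adjSwap ?_ ?_ <;> grind

theorem IsLinked.not_adj (hz : IsFPF z) (hij : IsLinked z i j) : ¬(pathGraph m).Adj i j := by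
  have hfix := hz.2
  rw [SimpleGraph.pathGraph_adj]
  simp only [IsLinked] at *
  grind

theorem IsLinked.not_isAscent (h : IsLinked z i j) : ¬IsAscent z i := by
  simp [IsAscent, h.1, h.2, Fin.castSucc_le_succ]

theorem IsLinked.not_adj_of_adj (hz : IsFPF z) (hij : IsLinked z i j)
    (hik : (pathGraph m).Adj i k) (hk : IsAscent z k) (hne : i ≠ j) : ¬(pathGraph m).Adj k j := by
  intro hkj
  have hchain : i.succ = k.castSucc ∧ k.succ = j.castSucc ∨
      j.succ = k.castSucc ∧ k.succ = i.castSucc := by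
    simp only [SimpleGraph.pathGraph_adj, Fin.ext_iff, Fin.val_succ, Fin.val_castSucc] at *
    omega
  have hji := hij.symm hz
  refine hk.not_ge ?_
  rcases hchain with ⟨hik, hkj⟩ | ⟨hjk, hki⟩
  · rw [hkj, hji.1, ← hik, hij.2, hik, ← hkj]
    exact Fin.castSucc_le_succ k
  · rw [hki, hij.1, ← hjk, hji.2, hjk, ← hki]
    exact Fin.castSucc_le_succ k

theorem IsLinked.adjConj_adjConj (hz : IsFPF z) (hij : IsLinked z i j)
    (hik : (pathGraph m).Adj i k) (hk : IsAscent z k) :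
    IsLinked (adjConj i (adjConj k z)) k (if i = j then k else j) := by
  simp only [IsLinked, adjConj_apply, adjSwap_adjSwap_castSucc hik, adjSwap_adjSwap_succ hik,
    hij.1, hij.2]
  split_ifs with h
  · subst h
    exact ⟨adjSwap_adjSwap_succ hik.symm, adjSwap_adjSwap_castSucc hik.symm⟩
  · have hji := mt SimpleGraph.Adj.symm (hij.not_adj hz)
    have hjk := mt SimpleGraph.Adj.symm (hij.not_adj_of_adj hz hik hk h)
    have hne : j ≠ k := by rintro rfl; exact hji hik.symm
    simp only [adjSwap_castSucc_of_ne hjk hne, adjSwap_succ_of_ne hjk hne,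
      adjSwap_castSucc_of_ne hji (Ne.symm h), adjSwap_succ_of_ne hji (Ne.symm h), and_self]

theorem IsLinked.adjConj_of_not_adj (hz : IsFPF z) (h : IsLinked z i j)
    (hik : ¬(pathGraph m).Adj i k) (hjk : ¬(pathGraph m).Adj j k) (hk : IsAscent z k) :
    IsLinked (adjConj k z) i j := by
  have hneik : i ≠ k := by
    rintro rfl
    exact h.not_isAscent hk
  have hnejk : j ≠ k := by
    rintro rfl
    exact (h.symm hz).not_isAscent hk
  simp only [IsLinked, adjConj_apply, adjSwap_castSucc_of_ne hik hneik,
    adjSwap_succ_of_ne hik hneik, h.1, h.2, adjSwap_castSucc_of_ne hjk hnejk,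
    adjSwap_succ_of_ne hjk hnejk, and_self]

theorem toLex_lt_toLex_adjConj (hz : IsFPF z) (hk : IsAscent z k) :
    toLex ⇑z < toLex ⇑(adjConj k z) := by
  have hne : k.castSucc ≠ z k.castSucc := (hz.2 _).symm
  refine ⟨min k.castSucc (z k.castSucc), fun x hx => ?_, ?_⟩
  · obtain ⟨hxk, hxzk⟩ := lt_min_iff.1 hx
    have hzx : z x ≠ k.castSucc := by
      intro h
      simp [← h, hz.apply_apply] at hxzk
    have hzx' : z x ≠ k.succ := by
      intro h
      rw [IsAscent, ← h, hz.apply_apply] at hk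
      exact hk.not_gt hxzk
    have hxs : x ≠ k.succ := (hxk.trans k.castSucc_lt_succ).ne
    change z x = adjConj k z x
    rw [adjConj_apply, Equiv.swap_apply_of_ne_of_ne hxk.ne hxs,
      Equiv.swap_apply_of_ne_of_ne hzx hzx']
  · change z (min _ _) < adjConj k z (min _ _)
    rcases hne.lt_or_gt with hlt | hlt
    · have hks : z k.castSucc ≠ k.succ := by
        intro h
        rw [IsAscent, h, ← h, hz.apply_apply, h] at hk
        exact hk.not_gt k.castSucc_lt_succ
      rw [min_eq_left hlt.le, adjConj_apply, Equiv.swap_apply_left,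
        ← Equiv.swap_apply_of_ne_of_ne hne.symm hks]
      exact adjSwap_lt_adjSwap hk fun h => absurd h hne.symm
    · rw [min_eq_right hlt.le, hz.apply_apply, adjConj_apply,
        Equiv.swap_apply_of_ne_of_ne hne.symm (hlt.trans k.castSucc_lt_succ).ne, hz.apply_apply,
        Equiv.swap_apply_left]
      exact k.castSucc_lt_succ

theorem eq_revPerm_of_forall_not_isAscent (hz : ∀ k, ¬IsAscent z k) : z = revPerm (m + 1) := by
  have hanti : StrictAnti z := Fin.strictAnti_iff_succ_lt.2 fun k =>
    (not_lt.1 (hz k)).lt_of_ne (z.injective.ne k.castSucc_lt_succ.ne')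
  have hmono : StrictMono (revPerm (m + 1) * z) := fun x y h => Fin.rev_lt_rev.2 (hanti h)
  have hid : hmono.orderIsoOfSurjective _ (Equiv.surjective _) = OrderIso.refl _ :=
    Subsingleton.elim _ _
  refine Equiv.ext fun x => ?_
  rw [← Fin.rev_rev (z x)]
  exact congr(Fin.rev ($hid x))

theorem not_isAscent_revPerm (k : Fin m) : ¬IsAscent (revPerm (m + 1)) k :=
  (Fin.rev_lt_rev.2 k.castSucc_lt_succ).not_gt

theorem isLinked_revPerm_iff : IsLinked (revPerm (m + 1)) i j ↔ j = i.rev := by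
  simp [IsLinked, revPerm, Fin.rev_castSucc, Fin.rev_succ, eq_comm]

theorem _root_.IsFPF.adjConj (hz : IsFPF z) (k : Fin m) : IsFPF (adjConj k z) :=
  hz.mul_mul (Equiv.swap_mul_self _ _)

theorem isFPF_induction {P : ∀ z : Perm (Fin (m + 1)), IsFPF z → Prop}
    (ih : ∀ z (hz : IsFPF z), (∀ y (hy : IsFPF y), toLex ⇑z < toLex ⇑y → P y hy) → P z hz)
    (z : Perm (Fin (m + 1))) (hz : IsFPF z) : P z hz := by
  induction hw : toLex ⇑z using WellFoundedGT.induction generalizing z with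
  | ind w ihw => exact ih z hz fun y hy hlt => ihw _ (hw ▸ hlt) y hy rfl

end AdjacentTranspositions

section PathValue

variable {M : Type*} {m : ℕ} {D : Fin m → M → M} {b : M → M} {t : M} {f g : M}
  {i j k : Fin m} {z : Perm (Fin (m + 1))}

/-- The operator as which `D i` is required to act on the value attached to `z` when
`IsLinked z i j`; the diagonal case `i = j` has its own operator `b`. -/
def twist (D : Fin m → M → M) (b : M → M) (i j : Fin m) : M → M := if i = j then b else D j

/-- The operators `D i` satisfy the braid relations of type `A` and commute with `b`, and they act
on `t` as required of the value attached to the order-reversing permutation, which links `i` to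
`i.rev`. -/
structure IsBraidSystem (D : Fin m → M → M) (b : M → M) (t : M) : Prop where
  comm : ∀ {i k}, ¬(pathGraph m).Adj i k → ∀ f, D i (D k f) = D k (D i f)
  braid : ∀ {i k}, (pathGraph m).Adj i k → ∀ f, D i (D k (D i f)) = D k (D i (D k f))
  comm_diag : ∀ k f, D k (b f) = b (D k f)
  top : ∀ i, D i t = twist D b i i.rev t

/-- `f` is obtained by transporting `t` from the order-reversing permutation to `z` along a chain of
conjugations at ascents, applying `D k` for each conjugation by `s_k`. -/
inductive IsPathValue (D : Fin m → M → M) (t : M) : Perm (Fin (m + 1)) → M → Prop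
  | top : IsPathValue D t (revPerm (m + 1)) t
  | step {z : Perm (Fin (m + 1))} {k : Fin m} {f : M} :
      IsAscent z k → IsPathValue D t (adjConj k z) f → IsPathValue D t z (D k f)

/-- The value attached to `z` is unique and is acted on by `D i` as `IsLinked z i j` requires. -/
structure IsCoherentAt (D : Fin m → M → M) (b : M → M) (t : M) (z : Perm (Fin (m + 1))) : Prop where
  unique : ∀ {f g}, IsPathValue D t z f → IsPathValue D t z g → f = g
  linked : ∀ {i j}, IsLinked z i j → ∀ {f}, IsPathValue D t z f → D i f = twist D b i j f

theorem exists_isPathValue (D : Fin m → M → M) (t : M) (hz : IsFPF z) :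
    ∃ f, IsPathValue D t z f := by
  induction z, hz using isFPF_induction with
  | ih z hz ih =>
    by_cases hasc : ∃ k, IsAscent z k
    · obtain ⟨k, hk⟩ := hasc
      obtain ⟨f, hf⟩ := ih _ (hz.adjConj k) (toLex_lt_toLex_adjConj hz hk)
      exact ⟨D k f, hf.step hk⟩
    · rw [eq_revPerm_of_forall_not_isAscent (not_exists.1 hasc)]
      exact ⟨t, .top⟩

theorem isPathValue_revPerm_iff : IsPathValue D t (revPerm (m + 1)) f ↔ f = t := by
  refine ⟨fun hf => ?_, fun hf => hf ▸ .top⟩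
  cases hf with
  | top => rfl
  | step hk => exact absurd hk (not_isAscent_revPerm _)

theorem eq_of_isPathValue_of_adj (hD : IsBraidSystem D b t) (hz : IsFPF z)
    (ih : ∀ y, IsFPF y → toLex ⇑z < toLex ⇑y → IsCoherentAt D b t y)
    (hik : (pathGraph m).Adj i k) (hi : IsAscent z i) (hk : IsAscent z k)
    (hf : IsPathValue D t (adjConj i z) f) (hg : IsPathValue D t (adjConj k z) g) :
    D i f = D k g := by
  obtain ⟨h, hh⟩ := exists_isPathValue D t
    (((hz.adjConj k).adjConj i).adjConj k)
  have hg_eq : g = D i (D k h) :=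
    (ih _ (hz.adjConj k) (toLex_lt_toLex_adjConj hz hk)).unique hg
      ((hh.step (hi.adjConj_adjConj_of_adj hz hik)).step (hi.adjConj_of_adj hz hik hk))
  rw [← adjConj_braid hik] at hh
  have hf_eq : f = D k (D i h) :=
    (ih _ (hz.adjConj i) (toLex_lt_toLex_adjConj hz hi)).unique hf
      ((hh.step (hk.adjConj_adjConj_of_adj hz hik.symm)).step (hk.adjConj_of_adj hz hik.symm hi))
  rw [hf_eq, hg_eq, hD.braid hik]

theorem eq_of_isPathValue_of_not_adj (hD : IsBraidSystem D b t) (hz : IsFPF z)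
    (ih : ∀ y, IsFPF y → toLex ⇑z < toLex ⇑y → IsCoherentAt D b t y)
    (hik : ¬(pathGraph m).Adj i k) (hne : i ≠ k) (hi : IsAscent z i) (hk : IsAscent z k)
    (hf : IsPathValue D t (adjConj i z) f) (hg : IsPathValue D t (adjConj k z) g) :
    D i f = D k g := by
  have ih_i := ih _ (hz.adjConj i) (toLex_lt_toLex_adjConj hz hi)
  have ih_k := ih _ (hz.adjConj k) (toLex_lt_toLex_adjConj hz hk)
  have hki := mt SimpleGraph.Adj.symm hik
  by_cases hpar : IsParallel z i k
  · have hf_linked := ih_i.linked (hpar.isLinked_adjConj hik hne) hf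
    rw [← hpar.adjConj_eq hz hik] at hg
    rw [hf_linked, twist, if_neg hne, ih_i.unique hf hg]
  · obtain ⟨h, hh⟩ := exists_isPathValue D t ((hz.adjConj k).adjConj i)
    have hg_eq : g = D i h := ih_k.unique hg (hh.step (hi.adjConj_of_not_isParallel hik hne hpar))
    rw [adjConj_comm hik] at hh
    have hf_eq : f = D k h := ih_i.unique hf
      (hh.step (hk.adjConj_of_not_isParallel hki hne.symm fun h => hpar (h.symm hz)))
    rw [hf_eq, hg_eq, hD.comm hik]

theorem comm_twist (hD : IsBraidSystem D b t) (hkj : i ≠ j → ¬(pathGraph m).Adj k j)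
    (f : M) : D k (twist D b i j f) = twist D b i j (D k f) := by
  unfold twist
  split_ifs with hij
  · exact hD.comm_diag k f
  · exact hD.comm (hkj hij) f

theorem twist_ite (hjk : j ≠ k) :
    twist D b k (if i = j then k else j) = twist D b i j := by
  unfold twist
  grind

theorem apply_eq_twist_of_adj (hD : IsBraidSystem D b t) (hz : IsFPF z)
    (ih : ∀ y, IsFPF y → toLex ⇑z < toLex ⇑y → IsCoherentAt D b t y)
    (hij : IsLinked z i j) (hik : (pathGraph m).Adj i k) (hk : IsAscent z k)
    (hg : IsPathValue D t (adjConj k z) g) : D i (D k g) = twist D b i j (D k g) := by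
  have hlt := toLex_lt_toLex_adjConj hz hk
  have hasc := hij.isAscent_adjConj hz hik hk
  have hjk : j ≠ k := by
    rintro rfl
    exact hij.not_adj hz hik
  obtain ⟨h, hh⟩ := exists_isPathValue D t ((hz.adjConj k).adjConj i)
  have hg_eq : g = D i h := (ih _ (hz.adjConj k) hlt).unique hg (hh.step hasc)
  have hk_h : D k h = twist D b i j h := by
    rw [← twist_ite hjk]
    exact (ih _ ((hz.adjConj k).adjConj i)
      (hlt.trans (toLex_lt_toLex_adjConj (hz.adjConj k) hasc))).linked
      (hij.adjConj_adjConj hz hik hk) hh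
  calc D i (D k g) = D k (D i (D k h)) := by rw [hg_eq, hD.braid hik]
    _ = D k (D i (twist D b i j h)) := by rw [hk_h]
    _ = twist D b i j (D k (D i h)) := by
      rw [comm_twist hD fun _ => hij.not_adj hz, comm_twist hD (hij.not_adj_of_adj hz hik hk)]
    _ = twist D b i j (D k g) := by rw [hg_eq]

theorem apply_eq_twist (hD : IsBraidSystem D b t) (hz : IsFPF z)
    (ih : ∀ y, IsFPF y → toLex ⇑z < toLex ⇑y → IsCoherentAt D b t y)
    (hij : IsLinked z i j) (hf : IsPathValue D t z f) : D i f = twist D b i j f := by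
  cases hf with
  | top => rw [isLinked_revPerm_iff.1 hij, hD.top]
  | @step _ k g hk hg =>
    by_cases hik : (pathGraph m).Adj i k
    · exact apply_eq_twist_of_adj hD hz ih hij hik hk hg
    by_cases hjk : (pathGraph m).Adj j k
    · have hne : i ≠ j := fun h => hik (h ▸ hjk)
      simpa [twist, hne, hne.symm] using
        (apply_eq_twist_of_adj hD hz ih (hij.symm hz) hjk hk hg).symm
    · have hlinked := hij.adjConj_of_not_adj hz hik hjk hk
      rw [hD.comm hik, (ih _ (hz.adjConj k) (toLex_lt_toLex_adjConj hz hk)).linked hlinked hg,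
        comm_twist hD fun _ => mt SimpleGraph.Adj.symm hjk]

theorem isCoherentAt (hD : IsBraidSystem D b t) (hz : IsFPF z) : IsCoherentAt D b t z := by
  induction z, hz using isFPF_induction with
  | ih z hz ih =>
    refine ⟨fun hf hg => ?_, fun hij _ => apply_eq_twist hD hz ih hij⟩
    cases hf with
    | top => exact (isPathValue_revPerm_iff.1 hg).symm
    | @step _ i f hi hf =>
      cases hg with
      | top => exact absurd hi (not_isAscent_revPerm i)
      | @step _ k g hk hg =>
        rcases eq_or_ne i k with rfl | hne
        · rw [(ih _ (hz.adjConj i) (toLex_lt_toLex_adjConj hz hi)).unique hf hg]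
        by_cases hik : (pathGraph m).Adj i k
        · exact eq_of_isPathValue_of_adj hD hz ih hik hi hk hf hg
        · exact eq_of_isPathValue_of_not_adj hD hz ih hik hne hi hk hf hg

end PathValue

section Swap

variable {α : Type*} [DecidableEq α] {a b c : α}

theorem swap_braid (hab : a ≠ b) (hbc : b ≠ c) (hac : a ≠ c) :
    Equiv.swap a b * Equiv.swap b c * Equiv.swap a b =
      Equiv.swap b c * Equiv.swap a b * Equiv.swap b c := by
  rw [Equiv.swap_mul_swap_mul_swap hab hac, Equiv.swap_comm a b, Equiv.swap_comm b c,
    Equiv.swap_mul_swap_mul_swap hbc.symm hac.symm, Equiv.swap_comm]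

end Swap

section DivDiff

variable {σ R : Type*} [CommRing R]

theorem X_sub_X_ne_zero [Nontrivial R] {a b : σ} (hab : a ≠ b) :
    (X a - X b : MvPolynomial σ R) ≠ 0 :=
  sub_ne_zero.2 fun h => hab (X_injective h)

variable [DecidableEq σ]

/-- The automorphism exchanging the variables `X a` and `X b`. -/
abbrev swapVars (a b : σ) : MvPolynomial σ R →ₐ[R] MvPolynomial σ R :=
  rename (Equiv.swap a b)

theorem swapVars_swapVars (a b : σ) (f : MvPolynomial σ R) :
    swapVars a b (swapVars a b f) = f := by
  rw [rename_rename, ← Equiv.Perm.coe_mul, Equiv.swap_mul_self, Equiv.Perm.coe_one,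
    rename_id_apply]

theorem swapVars_comm {a b c d : σ} (habcd : [a, b, c, d].Nodup) (f : MvPolynomial σ R) :
    swapVars a b (swapVars c d f) = swapVars c d (swapVars a b f) := by
  simp only [rename_rename, ← Equiv.Perm.coe_mul, (Equiv.Perm.disjoint_swap_swap habcd).commute.eq]

theorem swapVars_braid {a b c : σ} (hab : a ≠ b) (hbc : b ≠ c) (hac : a ≠ c)
    (f : MvPolynomial σ R) :
    swapVars a b (swapVars b c (swapVars a b f)) =
      swapVars b c (swapVars a b (swapVars b c f)) := by
  simp only [rename_rename, ← Equiv.Perm.coe_mul, ← mul_assoc, swap_braid hab hbc hac]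

theorem X_sub_X_dvd_sub_swapVars (a b : σ) (f : MvPolynomial σ R) :
    (X a - X b) ∣ f - swapVars a b f := by
  induction f using MvPolynomial.induction_on with
  | C r => simp
  | add p q hp hq => simpa only [map_add, add_sub_add_comm] using dvd_add hp hq
  | mul_X p c hp =>
    have hX : (X a - X b : MvPolynomial σ R) ∣ X c - swapVars a b (X c) := by
      rw [rename_X, Equiv.swap_apply_def]
      split_ifs with hca hcb
      · rw [hca]
      · rw [hcb, ← neg_sub, neg_dvd]
      · simp
    have hsplit : p * X c - swapVars a b (p * X c) =
        (p - swapVars a b p) * X c + swapVars a b p * (X c - swapVars a b (X c)) := by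
      rw [map_mul]
      ring
    rw [hsplit]
    exact dvd_add (hp.mul_right _) (hX.mul_left _)

/-- The `β`-divided difference `f ↦ ∂((1 + β X b) f)`, where `∂` is the divided difference in the
variables `X a` and `X b`. -/
def betaDivDiff (β : R) (a b : σ) (f : MvPolynomial σ R) : MvPolynomial σ R :=
  (X_sub_X_dvd_sub_swapVars a b ((1 + C β * X b) * f)).choose

variable {β : R} {a b c d : σ} {f g : MvPolynomial σ R}

theorem X_sub_X_mul_betaDivDiff (β : R) (a b : σ) (f : MvPolynomial σ R) :
    (X a - X b) * betaDivDiff β a b f =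
      (1 + C β * X b) * f - (1 + C β * X a) * swapVars a b f := by
  have hspec := (X_sub_X_dvd_sub_swapVars a b ((1 + C β * X b) * f)).choose_spec
  simpa [betaDivDiff] using hspec.symm

variable [IsDomain R]

theorem betaDivDiff_eq_iff (hab : a ≠ b) :
    betaDivDiff β a b f = g ↔
      (X a - X b) * g = (1 + C β * X b) * f - (1 + C β * X a) * swapVars a b f := by
  rw [← X_sub_X_mul_betaDivDiff, mul_right_inj' (X_sub_X_ne_zero hab), eq_comm]

theorem betaDivDiff_of_swapVars_eq (hab : a ≠ b) (hf : swapVars a b f = f) :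
    betaDivDiff β a b f = -C β * f := by
  rw [betaDivDiff_eq_iff hab, hf]
  ring

theorem betaDivDiff_C_mul (hab : a ≠ b) (r : R) :
    betaDivDiff β a b (C r * f) = C r * betaDivDiff β a b f := by
  rw [betaDivDiff_eq_iff hab, map_mul, rename_C]
  linear_combination C r * X_sub_X_mul_betaDivDiff β a b f

theorem betaDivDiff_mul_of_swapVars_eq (hab : a ≠ b) (hac : a ≠ c) (hbc : b ≠ c)
    (hg : swapVars a b g = g) :
    betaDivDiff β a b ((X a + X c + C β * (X a * X c)) * g) = g := by
  rw [betaDivDiff_eq_iff hab, map_mul, hg]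
  simp only [map_add, map_mul, rename_X, rename_C, Equiv.swap_apply_left,
    Equiv.swap_apply_of_ne_of_ne hac.symm hbc.symm]
  ring

theorem swapVars_betaDivDiff (hab : a ≠ b) (f : MvPolynomial σ R) :
    swapVars a b (betaDivDiff β a b f) = betaDivDiff β a b f := by
  have hspec := X_sub_X_mul_betaDivDiff β a b f
  have hspec_swap := congrArg (swapVars a b) hspec
  simp only [map_mul, map_sub, map_add, map_one, rename_C, rename_X, Equiv.swap_apply_left,
    Equiv.swap_apply_right, swapVars_swapVars] at hspec_swap
  apply mul_left_cancel₀ (X_sub_X_ne_zero hab)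
  linear_combination -hspec_swap - hspec

theorem betaDivDiff_comm (habcd : [a, b, c, d].Nodup) (f : MvPolynomial σ R) :
    betaDivDiff β a b (betaDivDiff β c d f) = betaDivDiff β c d (betaDivDiff β a b f) := by
  obtain ⟨⟨hab, hac, had⟩, ⟨hbc, hbd⟩, hcd⟩ :
      (a ≠ b ∧ a ≠ c ∧ a ≠ d) ∧ (b ≠ c ∧ b ≠ d) ∧ c ≠ d := by
    simpa using habcd
  have hab_f := X_sub_X_mul_betaDivDiff β a b f
  have hcd_f := X_sub_X_mul_betaDivDiff β c d f
  have hswap_ab := congrArg (swapVars c d) hab_f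
  have hswap_cd := congrArg (swapVars a b) hcd_f
  simp only [map_mul, map_sub, map_add, map_one, rename_C, rename_X,
    Equiv.swap_apply_of_ne_of_ne hac had, Equiv.swap_apply_of_ne_of_ne hbc hbd] at hswap_ab
  simp only [map_mul, map_sub, map_add, map_one, rename_C, rename_X,
    Equiv.swap_apply_of_ne_of_ne hac.symm hbc.symm,
    Equiv.swap_apply_of_ne_of_ne had.symm hbd.symm, swapVars_comm habcd] at hswap_cd
  apply mul_left_cancel₀ (mul_ne_zero (X_sub_X_ne_zero hab) (X_sub_X_ne_zero hcd))
  linear_combination (X c - X d) * X_sub_X_mul_betaDivDiff β a b (betaDivDiff β c d f)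
    - (X a - X b) * X_sub_X_mul_betaDivDiff β c d (betaDivDiff β a b f)
    + (1 + C β * X b) * hcd_f - (1 + C β * X a) * hswap_cd
    - (1 + C β * X d) * hab_f + (1 + C β * X c) * hswap_ab

/-- The signed sum of `f` over the permutations of the three variables `X a`, `X b`, `X c`. -/
def antisymmetrize (a b c : σ) (f : MvPolynomial σ R) : MvPolynomial σ R :=
  f - swapVars a b f - swapVars b c f + swapVars a b (swapVars b c f)
    + swapVars b c (swapVars a b f) - swapVars a b (swapVars b c (swapVars a b f))

theorem vandermonde_mul_betaDivDiff_left (hab : a ≠ b) (hbc : b ≠ c) (hac : a ≠ c)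
    (f : MvPolynomial σ R) :
    (X a - X b) * (X b - X c) * (X a - X c) *
        betaDivDiff β a b (betaDivDiff β b c (betaDivDiff β a b f)) =
      antisymmetrize a b c ((1 + C β * X b) * (1 + C β * X c) ^ 2 * f) := by
  have hinner := X_sub_X_mul_betaDivDiff β a b f
  have hmiddle := X_sub_X_mul_betaDivDiff β b c (betaDivDiff β a b f)
  have houter := X_sub_X_mul_betaDivDiff β a b (betaDivDiff β b c (betaDivDiff β a b f))
  have hinner_bc := congrArg (swapVars b c) hinner
  have hmiddle_ab := congrArg (swapVars a b) hmiddle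
  have hinner_bc_ab := congrArg (swapVars a b) hinner_bc
  simp only [antisymmetrize, map_mul, map_sub, map_add, map_one, map_pow, rename_C, rename_X,
    Equiv.swap_apply_left, Equiv.swap_apply_right, swapVars_betaDivDiff hab,
    Equiv.swap_apply_of_ne_of_ne hab hac, Equiv.swap_apply_of_ne_of_ne hac.symm hbc.symm]
    at hinner_bc hmiddle_ab hinner_bc_ab ⊢
  apply mul_left_cancel₀ (X_sub_X_ne_zero hab)
  linear_combination (X a - X b) * (X b - X c) * (X a - X c) * houter
    + (X a - X b) * (X a - X c) * (1 + C β * X b) * hmiddle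
    - (X a - X b) * (X b - X c) * (1 + C β * X a) * hmiddle_ab
    + (X a - X b) * (1 + C β * X c) ^ 2 * hinner
    - (X a - X b) * (1 + C β * X b) ^ 2 * hinner_bc
    + (X a - X b) * (1 + C β * X a) ^ 2 * hinner_bc_ab

theorem vandermonde_mul_betaDivDiff_right (hab : a ≠ b) (hbc : b ≠ c) (hac : a ≠ c)
    (f : MvPolynomial σ R) :
    (X a - X b) * (X b - X c) * (X a - X c) *
        betaDivDiff β b c (betaDivDiff β a b (betaDivDiff β b c f)) =
      antisymmetrize a b c ((1 + C β * X b) * (1 + C β * X c) ^ 2 * f) := by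
  have hinner := X_sub_X_mul_betaDivDiff β b c f
  have hmiddle := X_sub_X_mul_betaDivDiff β a b (betaDivDiff β b c f)
  have houter := X_sub_X_mul_betaDivDiff β b c (betaDivDiff β a b (betaDivDiff β b c f))
  have hinner_ab := congrArg (swapVars a b) hinner
  have hmiddle_bc := congrArg (swapVars b c) hmiddle
  have hinner_ab_bc := congrArg (swapVars b c) hinner_ab
  simp only [antisymmetrize, map_mul, map_sub, map_add, map_one, map_pow, rename_C, rename_X,
    Equiv.swap_apply_left, Equiv.swap_apply_right, swapVars_betaDivDiff hbc,
    Equiv.swap_apply_of_ne_of_ne hab hac, Equiv.swap_apply_of_ne_of_ne hac.symm hbc.symm,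
    swapVars_braid hab hbc hac] at hinner_ab hmiddle_bc hinner_ab_bc ⊢
  apply mul_left_cancel₀ (X_sub_X_ne_zero hbc)
  linear_combination (X a - X b) * (X b - X c) * (X a - X c) * houter
    + (X b - X c) * (X a - X c) * (1 + C β * X c) * hmiddle
    - (X a - X b) * (X b - X c) * (1 + C β * X b) * hmiddle_bc
    + (X b - X c) * (1 + C β * X b) * (1 + C β * X c) * hinner
    - (X b - X c) * (1 + C β * X a) * (1 + C β * X c) * hinner_ab
    + (X b - X c) * (1 + C β * X a) * (1 + C β * X b) * hinner_ab_bc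

theorem betaDivDiff_braid (hab : a ≠ b) (hbc : b ≠ c) (hac : a ≠ c) (f : MvPolynomial σ R) :
    betaDivDiff β a b (betaDivDiff β b c (betaDivDiff β a b f)) =
      betaDivDiff β b c (betaDivDiff β a b (betaDivDiff β b c f)) := by
  have hvandermonde := mul_ne_zero (mul_ne_zero (X_sub_X_ne_zero (R := R) hab)
    (X_sub_X_ne_zero hbc)) (X_sub_X_ne_zero hac)
  apply mul_left_cancel₀ hvandermonde
  rw [vandermonde_mul_betaDivDiff_left hab hbc hac, vandermonde_mul_betaDivDiff_right hab hbc hac]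

end DivDiff

section TopPolynomial

variable {n : ℕ} {a b : Fin n}

theorem oplus_comm (a b : Fin n) : oplus a b = oplus b a := by
  unfold oplus
  ring

theorem swapVars_oplus (a b c d : Fin n) :
    swapVars a b (oplus c d) = oplus (Equiv.swap a b c) (Equiv.swap a b d) := by
  simp only [oplus, map_add, map_mul, rename_X, rename_C]

/-- `oplus` as a function of an unordered pair. -/
def pairOplus : Sym2 (Fin n) → MvPolynomial (Fin n) Rb := Sym2.lift ⟨oplus, oplus_comm⟩

theorem swapVars_prod_pairOplus {S : Finset (Sym2 (Fin n))}
    (hS : ∀ e ∈ S, e.map (Equiv.swap a b) ∈ S) :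
    swapVars a b (∏ e ∈ S, pairOplus e) = ∏ e ∈ S, pairOplus e := by
  have hinv : ∀ e ∈ S, (e.map (Equiv.swap a b)).map (Equiv.swap a b) = e := fun e _ => by
    rw [Sym2.map_map, ← Equiv.Perm.coe_mul, Equiv.swap_mul_self, Equiv.Perm.coe_one, Sym2.map_id,
      id]
  rw [map_prod]
  refine Finset.prod_nbij' _ _ hS hS hinv hinv fun e _ => ?_
  induction e with
  | _ c d => exact swapVars_oplus a b c d

/-- The unordered pairs indexing the factors of `spTop n`. -/
def topPairs (n : ℕ) : Finset (Sym2 (Fin n)) :=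
  (Finset.univ.filter fun p : Fin n × Fin n => p.1 < p.2 ∧ (p.1 : ℕ) + p.2 + 2 ≤ n).image
    fun p => s(p.1, p.2)

theorem mk_mem_topPairs : s(a, b) ∈ topPairs n ↔ a ≠ b ∧ (a : ℕ) + b + 2 ≤ n := by
  simp only [topPairs, Finset.mem_image, Finset.mem_filter, Finset.mem_univ, true_and, Prod.exists]
  constructor
  · rintro ⟨c, d, ⟨hlt, hle⟩, hcd⟩
    rcases Sym2.eq_iff.1 hcd with ⟨rfl, rfl⟩ | ⟨rfl, rfl⟩
    · exact ⟨hlt.ne, hle⟩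
    · exact ⟨hlt.ne', by omega⟩
  · rintro ⟨hne, hle⟩
    rcases hne.lt_or_gt with hlt | hlt
    · exact ⟨a, b, ⟨hlt, hle⟩, rfl⟩
    · exact ⟨b, a, ⟨hlt, by omega⟩, Sym2.eq_swap⟩

theorem spTop_eq_prod_topPairs (n : ℕ) : spTop n = ∏ e ∈ topPairs n, pairOplus e := by
  rw [topPairs, Finset.prod_image]
  · rfl
  · rintro ⟨a, b⟩ hab ⟨c, d⟩ hcd h
    simp only [Finset.coe_filter, Set.mem_ofPred_eq] at hab hcd
    rcases Sym2.eq_iff.1 h with ⟨rfl, rfl⟩ | ⟨rfl, rfl⟩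
    · rfl
    · exact absurd hab.2.1 hcd.2.1.not_gt

variable {m : ℕ}

theorem map_swap_mem_erase_topPairs (i : Fin m) {e : Sym2 (Fin (m + 1))}
    (he : e ∈ (topPairs (m + 1)).erase s(i.castSucc, i.rev.castSucc)) :
    e.map (Equiv.swap i.castSucc i.succ) ∈
      (topPairs (m + 1)).erase s(i.castSucc, i.rev.castSucc) := by
  induction e with
  | _ a b =>
    simp only [Finset.mem_erase, mk_mem_topPairs, Sym2.map_mk, ne_eq, Sym2.eq_iff,
      Equiv.swap_apply_def, Fin.ext_iff, Fin.val_castSucc, Fin.val_succ, Fin.val_rev] at he ⊢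
    grind

theorem betaDivDiff_spTop_of_rev_ne {i : Fin m} (hm : Even (m + 1)) (hi : i.rev ≠ i) :
    betaDivDiff bb i.castSucc i.succ (spTop (m + 1)) =
      ∏ e ∈ (topPairs (m + 1)).erase s(i.castSucc, i.rev.castSucc), pairOplus e := by
  have hmem : s(i.castSucc, i.rev.castSucc) ∈ topPairs (m + 1) := by
    rw [mk_mem_topPairs]
    simp only [ne_eq, Fin.castSucc_inj, hi.symm, Fin.val_castSucc, Fin.val_rev]
    grind
  rw [spTop_eq_prod_topPairs, ← Finset.mul_prod_erase _ _ hmem]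
  refine betaDivDiff_mul_of_swapVars_eq i.castSucc_lt_succ.ne ?_ ?_
    (swapVars_prod_pairOplus fun e => map_swap_mem_erase_topPairs i)
  · simpa using hi.symm
  · simp only [ne_eq, Fin.ext_iff, Fin.val_castSucc, Fin.val_succ, Fin.val_rev]
    obtain ⟨r, hr⟩ := hm
    omega

theorem betaDivDiff_spTop (hm : Even (m + 1)) (i : Fin m) :
    betaDivDiff bb i.castSucc i.succ (spTop (m + 1)) =
      if i = i.rev then -C bb * spTop (m + 1)
      else betaDivDiff bb i.rev.castSucc i.rev.succ (spTop (m + 1)) := by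
  split_ifs with hi
  · refine betaDivDiff_of_swapVars_eq i.castSucc_lt_succ.ne ?_
    have herase : (topPairs (m + 1)).erase s(i.castSucc, i.rev.castSucc) = topPairs (m + 1) :=
      Finset.erase_eq_of_notMem fun h => (mk_mem_topPairs.1 h).1 (by rw [← hi])
    rw [spTop_eq_prod_topPairs, ← herase]
    exact swapVars_prod_pairOplus fun e => map_swap_mem_erase_topPairs i
  · rw [betaDivDiff_spTop_of_rev_ne hm (Ne.symm hi),
      betaDivDiff_spTop_of_rev_ne (i := i.rev) hm (by rwa [Fin.rev_rev]), Fin.rev_rev, Sym2.eq_swap]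

end TopPolynomial

section SymplecticGrothendieck

variable {m : ℕ} {k : Fin m} {z : Perm (Fin (m + 1))}
  {f g : MvPolynomial (Fin (m + 1)) Rb} {G : Perm (Fin (m + 1)) → MvPolynomial (Fin (m + 1)) Rb}

/-- The operator `∂_i^{(β)}`. -/
def adjDivDiff (i : Fin m) : MvPolynomial (Fin (m + 1)) Rb → MvPolynomial (Fin (m + 1)) Rb :=
  betaDivDiff bb i.castSucc i.succ

theorem isDivDiffB_iff : IsDivDiffB k.castSucc k.succ f g ↔ adjDivDiff k f = g := by
  rw [adjDivDiff, betaDivDiff_eq_iff k.castSucc_lt_succ.ne, IsDivDiffB]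
  simp only [map_mul, map_add, map_one, rename_C, rename_X, Equiv.swap_apply_right]

theorem adjDivDiff_braid_of_succ_eq {i k : Fin m} (hik : i.succ = k.castSucc)
    (f : MvPolynomial (Fin (m + 1)) Rb) :
    adjDivDiff i (adjDivDiff k (adjDivDiff i f)) =
      adjDivDiff k (adjDivDiff i (adjDivDiff k f)) := by
  have hlt : i.castSucc < k.castSucc := hik ▸ i.castSucc_lt_succ
  rw [adjDivDiff, hik]
  exact betaDivDiff_braid hlt.ne k.castSucc_lt_succ.ne (hlt.trans k.castSucc_lt_succ).ne f

theorem isBraidSystem_adjDivDiff (hm : Even (m + 1)) :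
    IsBraidSystem (adjDivDiff (m := m)) (-C bb * ·) (spTop (m + 1)) where
  comm {i k} hik f := by
    rcases eq_or_ne i k with rfl | hne
    · rfl
    · exact betaDivDiff_comm (nodup_of_not_adj hik hne) f
  braid {i k} hik f := by
    rcases SimpleGraph.pathGraph_adj.1 hik with hik | hki
    · exact adjDivDiff_braid_of_succ_eq (Fin.ext hik) f
    · exact (adjDivDiff_braid_of_succ_eq (Fin.ext hki) f).symm
  comm_diag i f := by
    simp only [adjDivDiff, ← map_neg, betaDivDiff_C_mul i.castSucc_lt_succ.ne]
  top i := by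
    rw [twist, ite_apply]
    exact betaDivDiff_spTop hm i

theorem isSpFam_iff_forall_isAscent :
    IsSpFam (m + 1) G ↔ G (revPerm (m + 1)) = spTop (m + 1) ∧
      ∀ z, IsFPF z → ∀ k, IsAscent z k → G z = adjDivDiff k (G (adjConj k z)) := by
  refine and_congr_right fun _ => ⟨fun h z hz k hk => ?_, fun h z hz i j hij hi hj hlt => ?_⟩
  · rw [← adjConj_adjConj k z, isAscent_adjConj_iff (hz.adjConj k)] at hk
    obtain ⟨hi, hj, hlt⟩ := hk
    have hdiv : IsDivDiffB k.castSucc k.succ (G (adjConj k z)) (G (adjConj k (adjConj k z))) :=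
      h _ (hz.adjConj k) k.castSucc k.succ rfl hi hj hlt
    rw [adjConj_adjConj, isDivDiffB_iff] at hdiv
    exact hdiv.symm
  · obtain ⟨k, rfl, rfl⟩ : ∃ k : Fin m, i = k.castSucc ∧ j = k.succ :=
      ⟨⟨i, by omega⟩, rfl, Fin.ext hij⟩
    have hstep := h _ (hz.adjConj k) k ((isAscent_adjConj_iff hz).2 ⟨hi, hj, hlt⟩)
    rw [adjConj_adjConj] at hstep
    exact isDivDiffB_iff.2 hstep.symm

theorem isSpFam_iff_forall_isPathValue (hm : Even (m + 1)) :
    IsSpFam (m + 1) G ↔ ∀ z, IsFPF z → IsPathValue adjDivDiff (spTop (m + 1)) z (G z) := by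
  rw [isSpFam_iff_forall_isAscent]
  constructor
  · rintro ⟨htop, hstep⟩ z hz
    induction z, hz using isFPF_induction with
    | ih z hz ih =>
      by_cases hasc : ∃ k, IsAscent z k
      · obtain ⟨k, hk⟩ := hasc
        rw [hstep z hz k hk]
        exact (ih _ (hz.adjConj k) (toLex_lt_toLex_adjConj hz hk)).step hk
      · rw [eq_revPerm_of_forall_not_isAscent (not_exists.1 hasc), htop]
        exact .top
  · intro h
    refine ⟨isPathValue_revPerm_iff.1 (h _ (isFPF_revPerm hm)), fun z hz k hk => ?_⟩
    exact (isCoherentAt (isBraidSystem_adjDivDiff hm) hz).unique (h z hz)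
      ((h _ (hz.adjConj k)).step hk)

end SymplecticGrothendieck

end SpGrothendieck

theorem statement0 (n : ℕ) (hpos : 0 < n) (hev : n % 2 = 0) :
    ∃ G : Equiv.Perm (Fin n) → MvPolynomial (Fin n) Rb,
      IsSpFam n G ∧
        ∀ G' : Equiv.Perm (Fin n) → MvPolynomial (Fin n) Rb,
          IsSpFam n G' → ∀ z : Equiv.Perm (Fin n), IsFPF z → G' z = G z := by
  obtain ⟨m, rfl⟩ : ∃ m, n = m + 1 := ⟨n - 1, by omega⟩
  have hm : Even (m + 1) := Nat.even_iff.2 hev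
  choose! G hG using fun z (hz : IsFPF z) =>
    SpGrothendieck.exists_isPathValue SpGrothendieck.adjDivDiff (spTop (m + 1)) hz
  refine ⟨G, (SpGrothendieck.isSpFam_iff_forall_isPathValue hm).2 hG, fun G' hG' z hz => ?_⟩
  have hG'z := (SpGrothendieck.isSpFam_iff_forall_isPathValue hm).1 hG' z hz
  exact (SpGrothendieck.isCoherentAt (SpGrothendieck.isBraidSystem_adjDivDiff hm) hz).unique
    hG'z (hG z hz)

end
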